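/- arXiv:1901.01913 — 2 statements merged into one kernel-verified Lean document; each statement's English description precedes it below -/
import Mathlib

section
/- Let a0 ∈ ℝ^k and λ > 0. For every a ∈ ℝ^k, the infimum defining φ̂(a) is attained at the unique minimizer x*(a) = S_λ((Č_{a0})* ι a) = S_λ((C_{ι a})* ι a0), and the marginal objective has the closed form φ̂(a) = ½‖ι a0‖₂² − ½‖S_λ((Č_{a0})* ι a)‖₂². -/
open scoped BigOperators Matrix

attribute [local instance 10] Classical.propDecidable

noncomputable section

/-- The index `t mod m` as an element of `Fin m`. -/
def idx (m : ℕ) [NeZero m] (t : ℤ) : Fin m :=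
  ⟨(t % (m : ℤ)).toNat, by
    have hm : 0 < m := Nat.pos_of_ne_zero (NeZero.ne m)
    have hm' : (0 : ℤ) < (m : ℤ) := by exact_mod_cast hm
    have h1 : 0 ≤ t % (m : ℤ) := Int.emod_nonneg t (ne_of_gt hm')
    have h2 : t % (m : ℤ) < (m : ℤ) := Int.emod_lt_of_pos t hm'
    omega⟩

/-- Cyclic shift: `(cshift τ v) i = v ((i - τ) mod m)`. -/
def cshift {m : ℕ} [NeZero m] (τ : ℤ) (v : Fin m → ℝ) : Fin m → ℝ :=
  fun i => v (idx m ((i : ℤ) - τ))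

/-- Zero padding `ι : ℝ^k → ℝ^m`. -/
def pad (k m : ℕ) (a : Fin k → ℝ) : Fin m → ℝ :=
  fun i => if h : (i : ℕ) < k then a ⟨i, h⟩ else 0

/-- Restriction to the first `k` coordinates, `ι* : ℝ^m → ℝ^k`. -/
def unpad {k m : ℕ} (h : k ≤ m) (v : Fin m → ℝ) : Fin k → ℝ :=
  fun j => v (Fin.castLE h j)

/-- Circulant matrix `C_w` whose `j`-th column is `s_j[w]`. -/
def circ {m : ℕ} [NeZero m] (w : Fin m → ℝ) : Matrix (Fin m) (Fin m) ℝ :=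
  Matrix.of fun i j => cshift (j : ℤ) w i

/-- Reversed circulant matrix `Č_{a0}` whose `j`-th column is `s_{-j}[ι a0]`. -/
def rcirc (k m : ℕ) [NeZero m] (a0 : Fin k → ℝ) : Matrix (Fin m) (Fin m) ℝ :=
  Matrix.of fun i j => cshift (-(j : ℤ)) (pad k m a0) i

/-- Circular convolution `w ⊛ x = C_w x`. -/
def conv {m : ℕ} [NeZero m] (w x : Fin m → ℝ) : Fin m → ℝ := (circ w).mulVec x

def dotp {α : Type*} [Fintype α] (u v : α → ℝ) : ℝ := ∑ i, u i * v i

def l2sq {α : Type*} [Fintype α] (v : α → ℝ) : ℝ := ∑ i, v i ^ 2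

def l2norm {α : Type*} [Fintype α] (v : α → ℝ) : ℝ := Real.sqrt (l2sq v)

def l1norm {α : Type*} [Fintype α] (v : α → ℝ) : ℝ := ∑ i, |v i|

/-- Scalar soft-thresholding. -/
def soft (lam t : ℝ) : ℝ := Real.sign t * max (|t| - lam) 0

/-- Entrywise soft-thresholding `S_λ`. -/
def softvec {m : ℕ} (lam : ℝ) (u : Fin m → ℝ) : Fin m → ℝ := fun i => soft lam (u i)

/-- The shift truncation `ι* s_{-τ}[ι a0] ∈ ℝ^k`. -/
def shiftTrunc {k m : ℕ} [NeZero m] (h : k ≤ m) (a0 : Fin k → ℝ) (τ : Fin m) : Fin k → ℝ :=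
  unpad h (cshift (-(τ : ℤ)) (pad k m a0))

/-- The inner objective of the simplified marginal problem. -/
def phiHatInner (k m : ℕ) [NeZero m] (lam : ℝ) (a0 a : Fin k → ℝ) (x : Fin m → ℝ) : ℝ :=
  l2sq (pad k m a0) / 2 + l2sq x / 2 - dotp (conv (pad k m a) x) (pad k m a0) + lam * l1norm x

/-- The simplified marginal objective `φ̂`. -/
def phiHat (k m : ℕ) [NeZero m] (lam : ℝ) (a0 a : Fin k → ℝ) : ℝ :=
  sInf (Set.range (phiHatInner k m lam a0 a))

/-- Zero-padding `ι` as an `m × k` matrix. -/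
def padM (k m : ℕ) : Matrix (Fin m) (Fin k) ℝ :=
  Matrix.of fun i j => if (i : ℕ) = (j : ℕ) then 1 else 0

/-- The diagonal 0/1 projection matrix `P_I`. -/
def projM {m : ℕ} (I : Set (Fin m)) : Matrix (Fin m) (Fin m) ℝ :=
  Matrix.of fun i j => if i = j ∧ i ∈ I then 1 else 0

/-- The `ℓ² → ℓ²` operator norm of a matrix. -/
def opNorm {α β : Type*} [Fintype α] [Fintype β] (A : Matrix α β ℝ) : ℝ :=
  sSup {c | ∃ v : β → ℝ, l2norm v = 1 ∧ c = l2norm (A.mulVec v)}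

/-- The `ℓ² → ℓ∞` operator norm of a matrix. -/
def l2linfNorm {α β : Type*} [Fintype α] [Fintype β] (A : Matrix α β ℝ) : ℝ :=
  sSup {c | ∃ v : β → ℝ, l2norm v = 1 ∧ c = sSup {d | ∃ i, d = |A.mulVec v i|}}

/-- The smallest eigenvalue of a symmetric matrix, via the Rayleigh quotient. -/
def lamMin {n : ℕ} (A : Matrix (Fin n) (Fin n) ℝ) : ℝ :=
  sInf {c | ∃ v : Fin n → ℝ, l2sq v = 1 ∧ c = dotp v (A.mulVec v)}

/-- `‖v‖_p^p = ∑ |v i|^p` for a real exponent `p`. -/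
def lpPow {α : Type*} [Fintype α] (p : ℝ) (v : α → ℝ) : ℝ := ∑ i, |v i| ^ p

/-- The `ℓ^p` norm with real exponent `p`. -/
def lpNorm {α : Type*} [Fintype α] (p : ℝ) (v : α → ℝ) : ℝ := (lpPow p v) ^ (1 / p)

/-- The continuous linear functional `v ↦ ⟨g, v⟩` on `ℝ^n`. -/
def dotCLM {n : ℕ} (g : Fin n → ℝ) : (Fin n → ℝ) →L[ℝ] ℝ :=
  LinearMap.toContinuousLinearMap
    { toFun := fun v => dotp g v
      map_add' := fun x y => by
        simp [dotp, mul_add, Finset.sum_add_distrib]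
      map_smul' := fun c x => by
        simp only [dotp, Pi.smul_apply, smul_eq_mul, RingHom.id_apply, Finset.mul_sum]
        exact Finset.sum_congr rfl fun i _ => by ring }

theorem soft_facts (lam : ℝ) (hlam : 0 < lam) (b : ℝ) :
    |b - soft lam b| ≤ lam ∧
    soft lam b ^ 2 / 2 - b * soft lam b + lam * |soft lam b| = - (soft lam b ^ 2 / 2) := by
  rcases lt_trichotomy b 0 with hb | hb | hb
  · rcases le_total (|b| - lam) 0 with h | h
    · have : soft lam b = 0 := by simp [soft, max_eq_right h]
      rw [this]; simp; linarith
    · have e : soft lam b = b + lam := by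
        rw [soft, max_eq_left h, Real.sign_of_neg hb, abs_of_neg hb]; ring
      rw [abs_of_neg hb] at h
      rw [e, abs_of_nonpos (show b + lam ≤ 0 by linarith)]
      refine ⟨?_, by ring⟩
      rw [abs_le]; constructor <;> linarith
  · subst hb
    simp [soft, hlam.le]
  · rcases le_total (|b| - lam) 0 with h | h
    · have : soft lam b = 0 := by simp [soft, max_eq_right h]
      rw [this]; simp; linarith
    · have e : soft lam b = b - lam := by
        rw [soft, max_eq_left h, Real.sign_of_pos hb, abs_of_pos hb]; ring
      rw [abs_of_pos hb] at h
      rw [e, abs_of_nonneg (show 0 ≤ b - lam by linarith)]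
      refine ⟨?_, by ring⟩
      rw [abs_le]; constructor <;> linarith

theorem soft_ineq (lam : ℝ) (hlam : 0 < lam) (b x : ℝ) :
    - (soft lam b ^ 2 / 2) + (x - soft lam b) ^ 2 / 2 ≤ x ^ 2 / 2 - b * x + lam * |x| := by
  have h := (soft_facts lam hlam b).1
  have h1 : (b - soft lam b) * x ≤ lam * |x| :=
    calc (b - soft lam b) * x ≤ |(b - soft lam b) * x| := le_abs_self _
      _ = |b - soft lam b| * |x| := abs_mul _ _
      _ ≤ lam * |x| := by gcongr
  nlinarith

theorem idx_coe {m : ℕ} [NeZero m] (t : ℤ) : ((idx m t : Fin m) : ℤ) = t % (m : ℤ) := by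
  have hm' : (m : ℤ) ≠ 0 := by exact_mod_cast NeZero.ne m
  have h1 : 0 ≤ t % (m : ℤ) := Int.emod_nonneg t hm'
  simp [idx, h1]

theorem idx_self {m : ℕ} [NeZero m] (i : Fin m) (t : ℤ) (h : t % (m : ℤ) = (i : ℤ) % m) :
    idx m t = i := by
  apply Fin.ext
  have h2 : ((idx m t : Fin m) : ℤ) = ((i : Fin m) : ℤ) := by
    rw [idx_coe, h]
    exact Int.emod_eq_of_lt (by positivity) (by exact_mod_cast i.2)
  exact_mod_cast h2

theorem swap_eq {k m : ℕ} [NeZero m] (a0 a : Fin k → ℝ) :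
    ((rcirc k m a0)ᵀ).mulVec (pad k m a) = ((circ (pad k m a))ᵀ).mulVec (pad k m a0) := by
  funext j
  simp only [Matrix.mulVec, dotProduct, Matrix.transpose_apply, rcirc, circ, Matrix.of_apply,
    cshift]
  refine Finset.sum_bij' (fun i _ => idx m ((i : ℤ) - -(j : ℤ))) (fun i _ => idx m ((i : ℤ) - j))
    (by simp) (by simp) ?_ ?_ ?_
  · intro i _
    apply idx_self
    rw [idx_coe]; simp
  · intro i _
    apply idx_self
    rw [idx_coe]; simp
  · intro i _
    have : idx m (((idx m ((i : ℤ) - -(j : ℤ)) : Fin m) : ℤ) - (j : ℤ)) = i := by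
      apply idx_self
      rw [idx_coe]; simp
    rw [this, mul_comm]

theorem inner_eq {k m : ℕ} [NeZero m] (lam : ℝ) (a0 a : Fin k → ℝ) (x : Fin m → ℝ) :
    phiHatInner k m lam a0 a x = l2sq (pad k m a0) / 2 +
      ∑ i, (x i ^ 2 / 2 - (((rcirc k m a0)ᵀ).mulVec (pad k m a)) i * x i + lam * |x i|) := by
  have h : dotp (conv (pad k m a) x) (pad k m a0)
      = ∑ i, (((rcirc k m a0)ᵀ).mulVec (pad k m a)) i * x i := by
    rw [swap_eq]
    change (circ (pad k m a)).mulVec x ⬝ᵥ pad k m a0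
      = ((circ (pad k m a))ᵀ).mulVec (pad k m a0) ⬝ᵥ x
    rw [Matrix.mulVec_transpose, ← Matrix.dotProduct_mulVec, dotProduct_comm]
  rw [phiHatInner, h, Finset.sum_add_distrib, Finset.sum_sub_distrib, l1norm, Finset.mul_sum,
    ← Finset.sum_div]
  simp only [l2sq]
  ring

/-- the inner problem defining `φ̂(a)` is uniquely minimized at
`x*(a) = S_λ((Č_{a0})* ι a) = S_λ((C_{ι a})* ι a0)`, and
`φ̂(a) = ½‖ι a0‖₂² − ½‖S_λ((Č_{a0})* ι a)‖₂²`. -/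
theorem stmt_1 {k m : ℕ} [NeZero m] (hkm : k ≤ m) (lam : ℝ) (hlam : 0 < lam)
    (a0 a : Fin k → ℝ) :
    let xstar : Fin m → ℝ := softvec lam (((rcirc k m a0)ᵀ).mulVec (pad k m a))
    xstar = softvec lam (((circ (pad k m a))ᵀ).mulVec (pad k m a0)) ∧
    (∀ x : Fin m → ℝ, phiHatInner k m lam a0 a xstar ≤ phiHatInner k m lam a0 a x) ∧
    (∀ x : Fin m → ℝ, x ≠ xstar →
      phiHatInner k m lam a0 a xstar < phiHatInner k m lam a0 a x) ∧
    phiHat k m lam a0 a = l2sq (pad k m a0) / 2 - l2sq xstar / 2 := by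
  intro xstar
  have hs : phiHatInner k m lam a0 a xstar = l2sq (pad k m a0) / 2 - l2sq xstar / 2 := by
    rw [inner_eq, sub_eq_add_neg, l2sq, l2sq, Finset.sum_div Finset.univ (fun i => xstar i ^ 2),
      ← Finset.sum_neg_distrib]
    congr 1
    exact Finset.sum_congr rfl fun i _ => (soft_facts lam hlam _).2
  have hx : ∀ x : Fin m → ℝ, phiHatInner k m lam a0 a xstar + (∑ i, (x i - xstar i) ^ 2 / 2)
      ≤ phiHatInner k m lam a0 a x := by
    intro x
    rw [hs, inner_eq, sub_eq_add_neg, add_assoc, l2sq, l2sq,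
      Finset.sum_div Finset.univ (fun i => xstar i ^ 2),
      ← Finset.sum_neg_distrib, ← Finset.sum_add_distrib]
    refine add_le_add le_rfl (Finset.sum_le_sum fun i _ => ?_)
    exact soft_ineq lam hlam _ _
  have hle : ∀ x : Fin m → ℝ, phiHatInner k m lam a0 a xstar ≤ phiHatInner k m lam a0 a x := by
    intro x
    have h0 : 0 ≤ ∑ i, (x i - xstar i) ^ 2 / 2 := Finset.sum_nonneg fun i _ => by positivity
    linarith [hx x]
  refine ⟨?_, hle, ?_, ?_⟩
  · rw [← swap_eq]
  · intro x hne
    obtain ⟨i, hi⟩ := Function.ne_iff.mp hne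
    have h0 : 0 < ∑ i, (x i - xstar i) ^ 2 / 2 := by
      refine Finset.sum_pos' (fun i _ => by positivity) ⟨i, Finset.mem_univ i, ?_⟩
      have := sub_ne_zero.mpr hi
      positivity
    linarith [hx x]
  · rw [← hs]
    have : IsLeast (Set.range (phiHatInner k m lam a0 a)) (phiHatInner k m lam a0 a xstar) :=
      ⟨⟨xstar, rfl⟩, by rintro _ ⟨x, rfl⟩; exact hle x⟩
    exact this.csInf_eq

end
end

section
/- Let a0 ∈ ℝ^k with ‖a0‖₂ = 1 and 0 < λ < 1. Let ā ∈ ℝ^k with ‖ā‖₂ = 1, set v = S_λ((Č_{a0})* ι ā), and suppose I = supp(v) = {i₁ < … < i_{|I|}} is nonempty with sign vector σ = sign(v). For i ∈ I set η_i = ‖ι* s_{−i}[ι a0]‖₂, and let U be the k×|I| matrix whose j-th column is σ_{i_j} ι* s_{−i_j}[ι a0] / η_{i_j}. Define M_σ = −ι* Č_{a0} P_I (Č_{a0})* ι (a k×k matrix), b_σ = λ ι* Č_{a0} P_I σ ∈ ℝ^k, and γ = −(āᵀ M_σ ā + b_σᵀ ā), where P_I is the m×m diagonal 0/1 projection onto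 coordinates in I. Assume: (a) ā is a constrained stationary point, i.e. M_σ ā + b_σ = (āᵀ M_σ ā + b_σᵀ ā) ā; and (b) UᵀU = Id + Δ with ‖Δ‖_{ℓ²→ℓ∞} ≤ λ²/√6 and ‖Δ‖_op ≤ λ/6. Then γ > 0 and for every nonzero ξ ∈ range(M_σ), ξᵀ (M_σ + γ Id) ξ < 0; in particular, for every nonzero ξ ∈ range(M_σ) with ⟨ξ, ā⟩ = 0, ξᵀ P_{ā⊥} (M_σ + γ Id) P_{ā⊥} ξ < 0, where P_{ā⊥} = Id − ā āᵀ. -/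
open scoped BigOperators Matrix

attribute [local instance 10] Classical.propDecidable

noncomputable section

lemma aux_l2sq_nonneg {α : Type*} [Fintype α] (v : α → ℝ) : 0 ≤ l2sq v :=
  Finset.sum_nonneg fun i _ => sq_nonneg _

lemma aux_l2norm_sq {α : Type*} [Fintype α] (v : α → ℝ) : l2norm v ^ 2 = l2sq v :=
  Real.sq_sqrt (aux_l2sq_nonneg v)

lemma aux_l2norm_nonneg {α : Type*} [Fintype α] (v : α → ℝ) : 0 ≤ l2norm v :=
  Real.sqrt_nonneg _

lemma aux_cs {α : Type*} [Fintype α] (u v : α → ℝ) : (dotp u v) ^ 2 ≤ l2sq u * l2sq v :=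
  Finset.sum_mul_sq_le_sq_mul_sq _ _ _

lemma aux_l2sq_dotp {α : Type*} [Fintype α] (v : α → ℝ) : l2sq v = dotp v v := by
  simp [l2sq, dotp, sq]

lemma aux_l2sq_smul {α : Type*} [Fintype α] (c : ℝ) (v : α → ℝ) :
    l2sq (c • v) = c ^ 2 * l2sq v := by
  simp [l2sq, Finset.mul_sum, mul_pow]

lemma aux_l2norm_smul {α : Type*} [Fintype α] (c : ℝ) (v : α → ℝ) :
    l2norm (c • v) = |c| * l2norm v := by
  rw [l2norm, aux_l2sq_smul, Real.sqrt_mul (sq_nonneg _), Real.sqrt_sq_eq_abs]; rfl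

lemma aux_l2sq_eq_zero {α : Type*} [Fintype α] (v : α → ℝ) (h : l2sq v = 0) : v = 0 := by
  funext i
  have := (Finset.sum_eq_zero_iff_of_nonneg (fun i _ => sq_nonneg (v i))).1 h i (Finset.mem_univ i)
  simpa using this

lemma aux_mulVec_le {α β : Type*} [Fintype α] [Fintype β] (A : Matrix α β ℝ) (v : β → ℝ) (i : α) :
    (A.mulVec v i) ^ 2 ≤ l2sq (A i) * l2sq v := aux_cs (A i) v

lemma aux_mulVec_le2 {α β : Type*} [Fintype α] [Fintype β] (A : Matrix α β ℝ) (v : β → ℝ) :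
    l2sq (A.mulVec v) ≤ (∑ i, l2sq (A i)) * l2sq v := by
  rw [Finset.sum_mul]
  exact Finset.sum_le_sum fun i _ => aux_mulVec_le A v i

lemma aux_entry_le {α β : Type*} [Fintype α] [Fintype β] (A : Matrix α β ℝ) (v : β → ℝ) (i : α) :
    |A.mulVec v i| ≤ l2norm (A.mulVec v) := by
  apply Real.abs_le_sqrt
  exact Finset.single_le_sum (f := fun i => (A.mulVec v i) ^ 2) (fun i _ => sq_nonneg _)
    (Finset.mem_univ i)

lemma aux_unit_bdd {α β : Type*} [Fintype α] [Fintype β] (A : Matrix α β ℝ) (v : β → ℝ)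
    (hv : l2norm v = 1) : l2norm (A.mulVec v) ≤ Real.sqrt (∑ i, l2sq (A i)) := by
  apply Real.sqrt_le_sqrt
  have := aux_mulVec_le2 A v
  rw [← aux_l2norm_sq v, hv] at this
  simpa using this

lemma aux_op_unit {α β : Type*} [Fintype α] [Fintype β] (A : Matrix α β ℝ) (e : ℝ)
    (h : opNorm A ≤ e) (v : β → ℝ) (hv : l2norm v = 1) : l2norm (A.mulVec v) ≤ e := by
  unfold opNorm at h
  refine le_trans (le_csSup ?_ ?_) h
  swap
  · exact ⟨v, hv, rfl⟩
  refine ⟨Real.sqrt (∑ i, l2sq (A i)), ?_⟩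
  rintro _ ⟨v, hv, rfl⟩
  exact aux_unit_bdd A v hv

lemma aux_inf_unit {α β : Type*} [Fintype α] [Fintype β] (A : Matrix α β ℝ) (e : ℝ)
    (h : l2linfNorm A ≤ e) (v : β → ℝ) (hv : l2norm v = 1) (i : α) : |A.mulVec v i| ≤ e := by
  have h1 : |A.mulVec v i| ≤ sSup {d | ∃ i, d = |A.mulVec v i|} := by
    refine le_csSup ⟨l2norm (A.mulVec v), ?_⟩ ⟨i, rfl⟩
    rintro _ ⟨j, rfl⟩
    exact aux_entry_le A v j
  unfold l2linfNorm at h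
  refine le_trans (le_trans h1 (le_csSup ?_ ?_)) h
  swap
  · exact ⟨v, hv, rfl⟩
  refine ⟨Real.sqrt (∑ i, l2sq (A i)), ?_⟩
  rintro _ ⟨v, hv, rfl⟩
  refine csSup_le ⟨_, i, rfl⟩ ?_
  rintro _ ⟨j, rfl⟩
  exact (aux_entry_le A v j).trans (aux_unit_bdd A v hv)

lemma aux_normalize {β : Type*} [Fintype β] (v : β → ℝ) (hv : v ≠ 0) :
    0 < l2norm v ∧ ∃ w : β → ℝ, l2norm w = 1 ∧ v = l2norm v • w := by
  have hp : 0 < l2norm v := by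
    rcases (aux_l2norm_nonneg v).lt_or_eq with h | h
    · exact h
    · exact absurd (aux_l2sq_eq_zero v (by rw [← aux_l2norm_sq, ← h]; simp)) hv
  refine ⟨hp, (l2norm v)⁻¹ • v, ?_, ?_⟩
  · rw [aux_l2norm_smul, abs_of_pos (inv_pos.2 hp), inv_mul_cancel₀ hp.ne']
  · rw [smul_smul, mul_inv_cancel₀ hp.ne', one_smul]

lemma aux_op {α β : Type*} [Fintype α] [Fintype β] (A : Matrix α β ℝ) (e : ℝ)
    (h : opNorm A ≤ e) (v : β → ℝ) : l2norm (A.mulVec v) ≤ e * l2norm v := by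
  by_cases hv : v = 0
  · subst hv; simp [l2norm, l2sq]
  obtain ⟨hp, w, hw, hvw⟩ := aux_normalize v hv
  have := aux_op_unit A e h w hw
  set t := l2norm v
  rw [hvw, Matrix.mulVec_smul, aux_l2norm_smul, abs_of_pos hp, mul_comm]
  exact mul_le_mul_of_nonneg_right this hp.le

lemma aux_inf {α β : Type*} [Fintype α] [Fintype β] (A : Matrix α β ℝ) (e : ℝ)
    (h : l2linfNorm A ≤ e) (v : β → ℝ) (i : α) : |A.mulVec v i| ≤ e * l2norm v := by
  by_cases hv : v = 0
  · subst hv; simp [l2norm, l2sq]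
  obtain ⟨hp, w, hw, hvw⟩ := aux_normalize v hv
  have := aux_inf_unit A e h w hw i
  set t := l2norm v
  rw [hvw, Matrix.mulVec_smul, Pi.smul_apply, smul_eq_mul, abs_mul, abs_of_pos hp, mul_comm]
  exact mul_le_mul_of_nonneg_right this hp.le

lemma aux_adj {α β : Type*} [Fintype α] [Fintype β] (U : Matrix α β ℝ) (x : α → ℝ) (y : β → ℝ) :
    dotp x (U.mulVec y) = dotp (Uᵀ.mulVec x) y := by
  change x ⬝ᵥ (U *ᵥ y) = (Uᵀ *ᵥ x) ⬝ᵥ y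
  rw [Matrix.dotProduct_mulVec, Matrix.mulVec_transpose]

/-- scalar inequality -/
lemma aux_scalar (lam h g N : ℝ) (h0 : 0 < lam) (h1 : lam < 1) (hl : lam < h) (hh : h ≤ 1)
    (hg : 0 < g) (hg2 : g ≤ 1 + lam / 6) (hN : 0 ≤ N) (hNg : (1 - lam / 6) * N ^ 2 ≤ g ^ 2)
    (p d : ℝ) (hp : 0 < p) (hp1 : p ≤ 1) (hd : |d| ≤ lam ^ 2 / Real.sqrt 6 * N)
    (he : g * p = h * (h * p - lam) + d) : g < h ^ 2 * (1 - lam / 6) := by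
  have hs : 0 < Real.sqrt 6 := Real.sqrt_pos.2 (by norm_num)
  have hs2 : Real.sqrt 6 ^ 2 = 6 := Real.sq_sqrt (by norm_num)
  -- N / sqrt 6 ≤ g / 2
  have hX : N / Real.sqrt 6 ≤ g / 2 := by
    rw [div_le_iff₀ hs]
    apply le_of_sq_le_sq _ (by positivity) 
    nlinarith [sq_nonneg N]
  have hd2 : |d| ≤ lam ^ 2 * (g / 2) := by
    calc |d| ≤ lam ^ 2 / Real.sqrt 6 * N := hd
      _ = lam ^ 2 * (N / Real.sqrt 6) := by ring
      _ ≤ _ := by gcongr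
  have hd3 := (abs_le.1 hd2).2
  have hM : 0 < lam * h - lam ^ 2 * (g / 2) := by nlinarith [mul_pos h0 (sub_pos.2 hl), mul_pos h0 h0]
  have h4 : lam * h - lam ^ 2 * (g / 2) ≤ (h ^ 2 - g) * p := by nlinarith
  have h5 : 0 < h ^ 2 - g := by
    by_contra hc
    nlinarith
  have h6 : lam * h - lam ^ 2 * (g / 2) ≤ h ^ 2 - g := by nlinarith
  -- g (1 - lam^2/2) ≤ h^2 - lam h
  have h7 : 0 < 1 - lam ^ 2 / 2 := by nlinarith
  have hhp : 0 < h := h0.trans hl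
  have h8 : h ^ 2 - lam * h < h ^ 2 * (1 - lam / 6) * (1 - lam ^ 2 / 2) := by
    have : 1 - lam < (1 - lam / 6) * (1 - lam ^ 2 / 2) := by nlinarith [pow_pos h0 3]
    have h9 : h ^ 2 * (1 - lam) < h ^ 2 * ((1 - lam / 6) * (1 - lam ^ 2 / 2)) :=
      mul_lt_mul_of_pos_left this (by positivity)
    nlinarith [mul_nonneg (mul_pos h0 hhp).le (sub_nonneg.2 hh)]
  by_contra hc
  push Not at hc
  nlinarith [mul_le_mul_of_nonneg_right hc h7.le]

lemma aux_core {K J : Type*} [Fintype K] [Fintype J] [DecidableEq J] [Nonempty J]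
    (U : Matrix K J ℝ) (η : J → ℝ) (ab : K → ℝ) (lam g : ℝ) (h0 : 0 < lam) (h1 : lam < 1)
    (hab : l2sq ab = 1) (hU : ∀ j, l2sq (Uᵀ j) ≤ 1) (hη : ∀ j, 0 < η j) (hη1 : ∀ j, η j ≤ 1)
    (hw : ∀ j, lam < η j * (Uᵀ.mulVec ab) j)
    (hst : g • ab = U.mulVec (fun j => η j * (η j * (Uᵀ.mulVec ab) j - lam)))
    (hinf : l2linfNorm (Uᵀ * U - 1) ≤ lam ^ 2 / Real.sqrt 6)
    (hop : opNorm (Uᵀ * U - 1) ≤ lam / 6) :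
    0 < g ∧ ∀ y : J → ℝ, U.mulVec y ≠ 0 →
      g * l2sq (U.mulVec y) < ∑ j, η j ^ 2 * (Uᵀ.mulVec (U.mulVec y) j) ^ 2 := by
  set p := Uᵀ.mulVec ab with hp
  set c : J → ℝ := fun j => η j * (η j * p j - lam) with hc
  have hpp : ∀ j, 0 < p j := fun j => by
    have := h0.trans (hw j)
    exact (pos_iff_pos_of_mul_pos this).1 (hη j)
  have hp1 : ∀ j, p j ≤ 1 := fun j => by
    have : (p j) ^ 2 ≤ l2sq (Uᵀ j) * l2sq ab := aux_mulVec_le Uᵀ ab j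
    have := hU j
    nlinarith [hpp j]
  have hge : g = ∑ j, η j * p j * (η j * p j - lam) := by
    have h := congrArg (dotp ab) hst
    rw [aux_adj] at h
    have h2 : dotp ab (g • ab) = g * l2sq ab := by
      simp only [dotp, l2sq, Finset.mul_sum, Pi.smul_apply, smul_eq_mul]
      exact Finset.sum_congr rfl fun _ _ => by ring
    rw [h2, hab, mul_one] at h
    rw [h]
    simp only [dotp, ← hp, hc]
    exact Finset.sum_congr rfl fun _ _ => by ring
  have hgpos : 0 < g := by
    rw [hge]
    refine Finset.sum_pos (fun j _ => ?_) Finset.univ_nonempty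
    exact mul_pos (mul_pos (hη j) (hpp j)) (sub_pos.2 (hw j))
  -- quadratic form bounds
  have hG : ∀ y, Uᵀ.mulVec (U.mulVec y) = y + (Uᵀ * U - 1).mulVec y := fun y => by
    rw [Matrix.sub_mulVec, Matrix.one_mulVec, Matrix.mulVec_mulVec]; abel
  have hQ : ∀ y, |l2sq (U.mulVec y) - l2sq y| ≤ lam / 6 * l2sq y := fun y => by
    have e1 : l2sq (U.mulVec y) - l2sq y = dotp ((Uᵀ * U - 1).mulVec y) y := by
      rw [aux_l2sq_dotp, aux_adj, hG, aux_l2sq_dotp]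
      simp [dotp, add_mul, Finset.sum_add_distrib]
    rw [e1]
    apply abs_le_of_sq_le_sq _ (mul_nonneg (by positivity) (aux_l2sq_nonneg y))
    have e2 := aux_cs ((Uᵀ * U - 1).mulVec y) y
    have e3 := aux_op _ _ hop y
    have e4 : l2sq ((Uᵀ * U - 1).mulVec y) ≤ (lam / 6) ^ 2 * l2sq y := by
      rw [← aux_l2norm_sq, ← aux_l2norm_sq, ← mul_pow]
      exact pow_le_pow_left₀ (aux_l2norm_nonneg _) e3 2
    calc _ ≤ _ := e2
      _ ≤ (lam / 6) ^ 2 * l2sq y * l2sq y := mul_le_mul_of_nonneg_right e4 (aux_l2sq_nonneg y)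
      _ = _ := by ring
  have hpsq : l2sq p ≤ 1 + lam / 6 := by
    have e1 : l2sq p = dotp ab (U.mulVec p) := by rw [aux_adj, aux_l2sq_dotp]
    have e2 := aux_cs ab (U.mulVec p)
    rw [← e1, hab, one_mul] at e2
    have e3 := (abs_le.1 (hQ p)).2
    by_contra hcon
    push Not at hcon
    have : 0 < l2sq p := by linarith
    nlinarith
  have hgle : g ≤ 1 + lam / 6 := by
    refine le_trans ?_ hpsq
    rw [hge]
    refine Finset.sum_le_sum fun j _ => ?_
    have a1 := hη j
    have a2 := hη1 j
    have a3 := hpp j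
    have a4 := mul_pos a1 a3
    have a5 : η j * p j ≤ p j := by nlinarith
    nlinarith
  have hNg : (1 - lam / 6) * l2norm c ^ 2 ≤ g ^ 2 := by
    have e1 : l2sq (U.mulVec c) = g ^ 2 := by rw [← hst, aux_l2sq_smul, hab, mul_one]
    have e2 := (abs_le.1 (hQ c)).1
    rw [e1] at e2
    rw [aux_l2norm_sq]; linarith
  have hkey : ∀ j, g < η j ^ 2 * (1 - lam / 6) := fun j => by
    have e1 : g * p j = c j + (Uᵀ * U - 1).mulVec c j := by
      have := congrArg Uᵀ.mulVec hst
      rw [hG, Matrix.mulVec_smul] at this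
      exact congrFun this j
    have hl : lam < η j := lt_of_lt_of_le (hw j) (by nlinarith [hη j, hp1 j])
    exact aux_scalar lam (η j) g (l2norm c) h0 h1 hl (hη1 j) hgpos hgle (aux_l2norm_nonneg c) hNg
      (p j) _ (hpp j) (hp1 j) (aux_inf _ _ hinf c j) e1
  refine ⟨hgpos, fun y hy => ?_⟩
  set q := Uᵀ.mulVec (U.mulVec y) with hq
  have hUy : 0 < l2sq (U.mulVec y) :=
    lt_of_le_of_ne (aux_l2sq_nonneg _) fun h => hy (aux_l2sq_eq_zero _ h.symm)
  have hQy := (abs_le.1 (hQ y))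
  have hy0 : 0 < l2sq y := by nlinarith [hQy.2, aux_l2sq_nonneg y]
  have hqsq : (1 - lam / 6) * l2sq (U.mulVec y) ≤ l2sq q := by
    have e1 : l2sq (U.mulVec y) = dotp q y := by rw [aux_l2sq_dotp, aux_adj]
    have e2 := aux_cs q y
    rw [← e1] at e2
    have e3 : (1 - lam / 6) * l2sq y ≤ l2sq (U.mulVec y) := by linarith [hQy.1]
    have e4 := mul_le_mul_of_nonneg_right e3 hUy.le
    refine le_of_mul_le_mul_right ?_ hy0
    nlinarith
  have h6 : 0 < 1 - lam / 6 := by linarith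
  have hq0 : 0 < l2sq q := lt_of_lt_of_le (mul_pos h6 hUy) hqsq
  have hfin : g * l2sq q < (∑ j, η j ^ 2 * q j ^ 2) * (1 - lam / 6) := by
    have hne : ∃ j, q j ≠ 0 := by
      by_contra hcon
      push Not at hcon
      simp [l2sq, hcon] at hq0
    obtain ⟨j0, hj0⟩ := hne
    rw [l2sq, Finset.mul_sum, Finset.sum_mul]
    refine Finset.sum_lt_sum (fun j _ => ?_) ⟨j0, Finset.mem_univ _, ?_⟩
    · nlinarith [hkey j, sq_nonneg (q j)]
    · have : 0 < q j0 ^ 2 := by positivity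
      nlinarith [hkey j0]
  have := mul_le_mul_of_nonneg_left hqsq hgpos.le
  refine lt_of_mul_lt_mul_right ?_ h6.le
  nlinarith

lemma aux_idx_inj {m : ℕ} [NeZero m] {a b : ℕ} (t : ℤ) (ha : a < m) (hb : b < m)
    (h : idx m ((a : ℤ) - t) = idx m ((b : ℤ) - t)) : a = b := by
  have hm : (0 : ℤ) < m := by omega
  have h1 := congrArg Fin.val h
  simp only [idx] at h1
  have e1 := Int.emod_nonneg ((a : ℤ) - t) hm.ne'
  have e2 := Int.emod_nonneg ((b : ℤ) - t) hm.ne'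
  have h2 : ((a : ℤ) - t) % m = ((b : ℤ) - t) % m := by omega
  have h3 := Int.emod_emod_of_dvd
  have h4 : ((a : ℤ) - b) % m = 0 := by
    have := Int.emod_eq_emod_iff_emod_sub_eq_zero.1 h2
    rwa [show (a : ℤ) - t - (b - t) = a - b by ring] at this
  obtain ⟨d, hd⟩ := Int.dvd_of_emod_eq_zero h4
  have : d = 0 := by
    by_contra hne
    rcases lt_or_gt_of_ne hne with h | h
    · nlinarith
    · nlinarith
  subst this
  omega

lemma aux_pad_sum {k m : ℕ} (h : k ≤ m) (f : Fin m → ℝ) (hf : ∀ i : Fin m, k ≤ (i : ℕ) → f i = 0) :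
    ∑ i, f i = ∑ r : Fin k, f (Fin.castLE h r) := by
  symm
  refine (Finset.sum_map Finset.univ (Fin.castLEEmb h) f).symm.trans ?_
  refine Finset.sum_subset (Finset.subset_univ _) fun i _ hi => hf i ?_
  by_contra hc
  push Not at hc
  exact hi (Finset.mem_map.2 ⟨⟨i, hc⟩, Finset.mem_univ _, rfl⟩)

lemma aux_l2sq_pad {k m : ℕ} (h : k ≤ m) (a : Fin k → ℝ) : l2sq (pad k m a) = l2sq a := by
  unfold l2sq
  rw [aux_pad_sum h]
  · simp [pad]
  · intro i hi; simp [pad, not_lt.2 hi]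

lemma aux_shift_le {k m : ℕ} [NeZero m] (h : k ≤ m) (a0 : Fin k → ℝ) (τ : Fin m) :
    l2sq (shiftTrunc h a0 τ) ≤ l2sq a0 := by
  rw [← aux_l2sq_pad h a0]
  unfold l2sq
  have hinj : Function.Injective (fun r : Fin k => idx m ((r : ℕ) - (-(τ : ℤ)))) := by
    intro r s hrs
    exact Fin.ext (aux_idx_inj _ (r.2.trans_le h) (s.2.trans_le h) hrs)
  calc _ = ∑ i ∈ Finset.univ.map ⟨_, hinj⟩, (pad k m a0 i) ^ 2 := by
        rw [Finset.sum_map]; rfl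
    _ ≤ _ := Finset.sum_le_sum_of_subset_of_nonneg (Finset.subset_univ _)
        fun i _ _ => sq_nonneg _

lemma aux_B {k m : ℕ} [NeZero m] (h : k ≤ m) (a0 : Fin k → ℝ) :
    (padM k m)ᵀ * rcirc k m a0 = Matrix.of fun r i => shiftTrunc h a0 i r := by
  ext r i
  rw [Matrix.mul_apply, Finset.sum_eq_single (Fin.castLE h r)]
  · simp [padM, rcirc, shiftTrunc, unpad]
  · intro j _ hj
    have : (j : ℕ) ≠ r := fun hh => hj (Fin.ext hh)
    simp [padM, this]
  · simp

lemma aux_corr {k m : ℕ} [NeZero m] (h : k ≤ m) (a0 a : Fin k → ℝ) (i : Fin m) :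
    ((rcirc k m a0)ᵀ).mulVec (pad k m a) i = dotp (shiftTrunc h a0 i) a := by
  rw [Matrix.mulVec, dotProduct, aux_pad_sum h]
  · simp [pad, dotp, rcirc, shiftTrunc, unpad]
  · intro i hi; simp [pad, not_lt.2 hi]

lemma aux_soft (lam t : ℝ) (h0 : 0 < lam) (h : soft lam t ≠ 0) :
    lam < Real.sign (soft lam t) * t ∧ Real.sign (soft lam t) ^ 2 = 1 := by
  have h1 : lam < |t| := by
    by_contra hc
    apply h
    rw [soft, max_eq_right (by linarith), mul_zero]
  have hmx : max (|t| - lam) 0 = |t| - lam := max_eq_left (by linarith)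
  have ht : t ≠ 0 := by
    rintro rfl; simp at h1; linarith
  rw [soft, hmx]
  rcases lt_or_gt_of_ne ht with h2 | h2
  · rw [Real.sign_of_neg h2, Real.sign_of_neg (by linarith)]
    rw [abs_of_neg h2] at h1
    constructor <;> linarith
  · rw [Real.sign_of_pos h2, Real.sign_of_pos (by linarith)]
    rw [abs_of_pos h2] at h1
    constructor <;> linarith

lemma aux_projsum {m : ℕ} (I : Set (Fin m)) [DecidablePred (· ∈ I)] [Fintype ↥I] (f : Fin m → ℝ) :
    ∑ i, (if i ∈ I then f i else 0) = ∑ j : ↥I, f j := by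
  rw [← Finset.sum_filter]
  exact Finset.sum_subtype _ (by simp) f

lemma aux_mulproj {k m : ℕ} (I : Set (Fin m)) (B : Matrix (Fin k) (Fin m) ℝ) :
    B * projM I = Matrix.of fun r i => if i ∈ I then B r i else 0 := by
  ext r i
  rw [Matrix.mul_apply, Finset.sum_eq_single i]
  · simp [projM]
  · intro j _ hj; simp [projM, hj]
  · simp

/-- at a stationary point `ā` with nonempty support whose shift-truncation
matrix `U` is nearly orthogonal, the multiplier `γ` is positive and the (projected)
quadratic form `M_σ + γ Id` is negative definite on `range(M_σ)`. -/
theorem stmt_13 {k m : ℕ} [NeZero m] (hkm : k ≤ m) (lam : ℝ) (h0 : 0 < lam)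
    (h1 : lam < 1) (a0 abar : Fin k → ℝ) (ha0 : l2norm a0 = 1) (habar : l2norm abar = 1) :
    let v : Fin m → ℝ := softvec lam (((rcirc k m a0)ᵀ).mulVec (pad k m abar))
    let I : Set (Fin m) := {i | v i ≠ 0}
    let σ : Fin m → ℝ := fun i => Real.sign (v i)
    let U : Matrix (Fin k) ↥I ℝ := Matrix.of fun (r : Fin k) (j : ↥I) =>
      σ (j : Fin m) * shiftTrunc hkm a0 (j : Fin m) r / l2norm (shiftTrunc hkm a0 (j : Fin m))
    let M : Matrix (Fin k) (Fin k) ℝ :=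
      -((padM k m)ᵀ * rcirc k m a0 * projM I * (rcirc k m a0)ᵀ * padM k m)
    let b : Fin k → ℝ := lam • ((padM k m)ᵀ * rcirc k m a0 * projM I).mulVec σ
    let γ : ℝ := -(dotp abar (M.mulVec abar) + dotp b abar)
    I.Nonempty →
    M.mulVec abar + b = (dotp abar (M.mulVec abar) + dotp b abar) • abar →
    l2linfNorm (Uᵀ * U - 1) ≤ lam ^ 2 / Real.sqrt 6 →
    opNorm (Uᵀ * U - 1) ≤ lam / 6 →
    0 < γ ∧
    (∀ ξ : Fin k → ℝ, ξ ∈ Set.range M.mulVec → ξ ≠ 0 →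
      dotp ξ ((M + γ • (1 : Matrix (Fin k) (Fin k) ℝ)).mulVec ξ) < 0) ∧
    (∀ ξ : Fin k → ℝ, ξ ∈ Set.range M.mulVec → ξ ≠ 0 → dotp ξ abar = 0 →
      dotp ξ
        (((1 - Matrix.vecMulVec abar abar) * (M + γ • (1 : Matrix (Fin k) (Fin k) ℝ)) *
          (1 - Matrix.vecMulVec abar abar)).mulVec ξ) < 0) := by
  intro v I σ U M b γ hne hst hinf hop
  set η : ↥I → ℝ := fun j => l2norm (shiftTrunc hkm a0 (j : Fin m)) with hηd
  have : Nonempty ↥I := hne.to_subtype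
  have hab : l2sq abar = 1 := by rw [← aux_l2norm_sq, habar]; norm_num
  have ha0' : l2sq a0 = 1 := by rw [← aux_l2norm_sq, ha0]; norm_num
  have hvd : ∀ i, v i = soft lam (dotp (shiftTrunc hkm a0 i) abar) := fun i => by
    simp only [v, softvec]; rw [aux_corr hkm]
  have hsoft : ∀ j : ↥I, lam < σ j * dotp (shiftTrunc hkm a0 j) abar ∧ σ j ^ 2 = 1 := fun j => by
    have hj : v j ≠ 0 := j.2
    simp only [σ]
    rw [hvd] at hj ⊢
    exact aux_soft _ _ h0 hj
  have hη1 : ∀ j, η j ≤ 1 := fun j => by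
    have := aux_shift_le hkm a0 (j : Fin m)
    rw [ha0', ← aux_l2norm_sq] at this
    have h2 : 0 ≤ η j := aux_l2norm_nonneg _
    change η j ^ 2 ≤ 1 at this
    nlinarith
  have hη : ∀ j, 0 < η j := fun j => by
    have h2 : 0 ≤ η j := aux_l2norm_nonneg _
    rcases h2.lt_or_eq with h | h
    · exact h
    · exfalso
      have h3 : l2sq (shiftTrunc hkm a0 (j : Fin m)) = 0 := by
        rw [← aux_l2norm_sq]; change η j ^ 2 = 0; rw [← h]; norm_num
      have h4 := (hsoft j).1
      rw [aux_l2sq_eq_zero _ h3] at h4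
      simp [dotp] at h4
      linarith
  have hUe : ∀ r j, η j * U r j = σ j * shiftTrunc hkm a0 j r := fun r j => by
    have := (hη j).ne'
    change η j * (σ j * shiftTrunc hkm a0 j r / η j) = _
    field_simp
  have hUn : ∀ j, l2sq (Uᵀ j) ≤ 1 := fun j => by
    have e : η j • Uᵀ j = σ j • shiftTrunc hkm a0 j := funext fun r => hUe r j
    have e2 := congrArg l2sq e
    rw [aux_l2sq_smul, aux_l2sq_smul, (hsoft j).2, one_mul, ← aux_l2norm_sq (shiftTrunc _ _ _)] at e2
    change η j ^ 2 * _ = η j ^ 2 at e2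
    have := pow_pos (hη j) 2
    nlinarith
  have hw : ∀ j, lam < η j * (Uᵀ.mulVec abar) j := fun j => by
    have e : η j * (Uᵀ.mulVec abar) j = σ j * dotp (shiftTrunc hkm a0 j) abar := by
      simp only [Matrix.mulVec, dotProduct, dotp, Finset.mul_sum, Matrix.transpose_apply]
      refine Finset.sum_congr rfl fun r _ => ?_
      rw [← mul_assoc, hUe, mul_assoc]
    rw [e]; exact (hsoft j).1
  have hB := aux_B hkm a0
  have hMe : ∀ r s, M r s = -∑ j : ↥I, η j ^ 2 * (U r j * U s j) := fun r s => by
    have e : (rcirc k m a0)ᵀ * padM k m = ((padM k m)ᵀ * rcirc k m a0)ᵀ := by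
      rw [Matrix.transpose_mul, Matrix.transpose_transpose]
    simp only [M]
    rw [Matrix.mul_assoc _ _ (padM k m), e, aux_mulproj, hB, Matrix.neg_apply, Matrix.mul_apply]
    congr 1
    simp only [Matrix.of_apply, Matrix.transpose_apply, ite_mul, zero_mul]
    refine (aux_projsum I (fun i => shiftTrunc hkm a0 i r * shiftTrunc hkm a0 i s)).trans ?_
    refine Finset.sum_congr rfl fun j _ => ?_
    have e1 := hUe r j
    have e2 := hUe s j
    calc _ = σ j ^ 2 * (shiftTrunc hkm a0 j r * shiftTrunc hkm a0 j s) := by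
          rw [(hsoft j).2, one_mul]
      _ = (σ j * shiftTrunc hkm a0 j r) * (σ j * shiftTrunc hkm a0 j s) := by ring
      _ = _ := by rw [← e1, ← e2]; ring
  have hbe : ∀ r, b r = lam * ∑ j : ↥I, η j * U r j := fun r => by
    simp only [b]
    rw [aux_mulproj, hB, Pi.smul_apply, smul_eq_mul, Matrix.mulVec, dotProduct]
    congr 1
    simp only [Matrix.of_apply, ite_mul, zero_mul]
    refine (aux_projsum I (fun i => shiftTrunc hkm a0 i r * σ i)).trans ?_
    refine Finset.sum_congr rfl fun j _ => ?_
    rw [hUe]; ring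
  have hMv : ∀ x, M.mulVec x = -U.mulVec (fun j => η j ^ 2 * Uᵀ.mulVec x j) := fun x => by
    funext r
    simp only [Matrix.mulVec, dotProduct, Pi.neg_apply, hMe, Matrix.transpose_apply, neg_mul,
      Finset.sum_neg_distrib, Finset.sum_mul, Finset.mul_sum]
    rw [Finset.sum_comm]
    congr 1
    exact Finset.sum_congr rfl fun _ _ => Finset.sum_congr rfl fun _ _ => by ring
  have hst' : γ • abar = U.mulVec (fun j => η j * (η j * (Uᵀ.mulVec abar) j - lam)) := by
    have e : γ • abar = -(M.mulVec abar + b) := by rw [hst]; simp only [γ]; rw [neg_smul]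
    rw [e, hMv]
    funext r
    simp only [Pi.neg_apply, Pi.add_apply, hbe, Matrix.mulVec, dotProduct, neg_add, neg_neg]
    rw [Finset.mul_sum]
    rw [← Finset.sum_neg_distrib, ← Finset.sum_add_distrib]
    refine Finset.sum_congr rfl fun j _ => ?_
    ring
  obtain ⟨hg, hmain⟩ := aux_core U η abar lam γ h0 h1 hab hUn hη hη1 hw hst' hinf hop
  have h2 : ∀ ξ : Fin k → ℝ, ξ ∈ Set.range M.mulVec → ξ ≠ 0 →
      dotp ξ ((M + γ • (1 : Matrix (Fin k) (Fin k) ℝ)).mulVec ξ) < 0 := by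
    rintro ξ ⟨x, hx⟩ hξ
    obtain ⟨y, hy⟩ : ∃ y, U.mulVec y = ξ := by
      refine ⟨-(fun j => η j ^ 2 * Uᵀ.mulVec x j), ?_⟩
      rw [Matrix.mulVec_neg, ← hMv]; exact hx
    have hm := hmain y (by rw [hy]; exact hξ)
    rw [hy] at hm
    have e1 : dotp ξ (M.mulVec ξ) = -∑ j, η j ^ 2 * (Uᵀ.mulVec ξ j) ^ 2 := by
      rw [hMv, ← Matrix.mulVec_neg, aux_adj]
      simp only [dotp, Pi.neg_apply, mul_neg, Finset.sum_neg_distrib]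
      congr 1
      exact Finset.sum_congr rfl fun _ _ => by ring
    have e2 : dotp ξ ((M + γ • (1 : Matrix (Fin k) (Fin k) ℝ)).mulVec ξ)
        = dotp ξ (M.mulVec ξ) + γ * l2sq ξ := by
      rw [Matrix.add_mulVec, Matrix.smul_mulVec, Matrix.one_mulVec]
      simp only [dotp, l2sq, Pi.add_apply, Pi.smul_apply, smul_eq_mul, mul_add,
        Finset.sum_add_distrib, Finset.mul_sum]
      congr 1
      exact Finset.sum_congr rfl fun _ _ => by ring
    rw [e2, e1]; linarith
  refine ⟨hg, h2, fun ξ hξ hξ0 hort => ?_⟩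
  have hP : (1 - Matrix.vecMulVec abar abar).mulVec ξ = ξ := by
    rw [Matrix.sub_mulVec, Matrix.one_mulVec]
    have : (Matrix.vecMulVec abar abar).mulVec ξ = 0 := by
      funext r
      simp only [Matrix.mulVec, dotProduct, Matrix.vecMulVec_apply, Pi.zero_apply]
      have : ∑ s, abar r * abar s * ξ s = abar r * dotp ξ abar := by
        rw [dotp, Finset.mul_sum]
        exact Finset.sum_congr rfl fun _ _ => by ring
      rw [this, hort, mul_zero]
    rw [this, sub_zero]
  have hPt : (1 - Matrix.vecMulVec abar abar)ᵀ = 1 - Matrix.vecMulVec abar abar := by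
    rw [Matrix.transpose_sub, Matrix.transpose_one, Matrix.transpose_vecMulVec]
  rw [← Matrix.mulVec_mulVec, ← Matrix.mulVec_mulVec, hP, aux_adj, hPt, hP]
  exact h2 ξ hξ hξ0

end
end
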